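/- Let k be a field, S = k[x,y,z], and I = (xz + yz, xy + yz, x² − yz, yz² + z³, y³ − z³). Then the artinian Gorenstein local ring R = S/I has no exact zero divisor, and I is not generated by any S-regular sequence of three elements (R is not a complete intersection). -/

import Mathlib

/-!
Write `R = k[x,y,z]/I` and `𝔪 = (x,y,z)`.

In `R` all cubic monomials equal `±z³` and `2z⁴ = 0`. The quotient of `R` by its forms of degree
four, `Trunc16 k`, has basis `1, x, y, z, yz, y², z², z³`. If `2 ≠ 0` in `k`, then `R` is
`Trunc16 k`. In characteristic two `I` vanishes on the line `x = y = z`, so `R` is not artinian;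
there `R` embeds in `Trunc16 k × k[t]`, the second factor being restriction to that line.

Suppose `ann a = (b)` with `a, b ≠ 0`. Then `a, b ∈ 𝔪`, and their linear parts have product zero.
The quadrics annihilating `a` contain a plane (the kernel of a linear form on `k³`), and they are
multiples of `b`; hence multiplication by the linear part of `b` has rank at least two on linear
forms. The equations for linear forms with product zero (`linear_annihilators`) then show that
`x + y` or `x + z` annihilates the linear part of `a`, without being a multiple of the linear part
of `b`. In characteristic two this form vanishes on the line and therefore annihilates `a` itself.
Otherwise the error is a multiple of `z³`, and it can be removed by adding a quadric, since linear
forms and quadrics are in perfect duality; if the linear part of `a` is zero, a plane of linear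
forms annihilates `a`. Each time `ann a` contains an element whose linear part is not a multiple
of that of `b`, a contradiction (`not_exactZeroDivisor_of_trunc`).

For the second assertion, the coefficients at `xz`, `xy`, `x²`, `y³` define a linear map which
kills `𝔪I` and maps `I` onto `k⁴`, so no three elements generate `I`, whether or not they form a
regular sequence.
-/


open MvPolynomial

/-- `f, g, h` is an `S`-regular sequence: each element is a nonzerodivisor modulo
the ideal generated by the preceding ones, and `(f,g,h) ≠ S`. -/
def IsRegularSeq3 {S : Type*} [CommRing S] (f g h : S) : Prop :=
  (∀ x : S, f * x = 0 → x = 0) ∧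
  (∀ x : S, g * x ∈ Ideal.span {f} → x ∈ Ideal.span {f}) ∧
  (∀ x : S, h * x ∈ Ideal.span {f, g} → x ∈ Ideal.span {f, g}) ∧
  Ideal.span {f, g, h} ≠ (⊤ : Ideal S)

/-- An element `a` of a commutative ring is an *exact zero divisor* if `a ≠ 0`,
`(0 : a) ≠ 0` and the annihilator `(0 : a)` is a principal (nonzero) ideal. -/
def IsExactZeroDivisor {A : Type*} [CommRing A] (a : A) : Prop :=
  a ≠ 0 ∧ ∃ b : A, b ≠ 0 ∧ (∀ x : A, x * a = 0 ↔ x ∈ Ideal.span {b})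

/-! ### The truncation of the quotient ring -/

/-- The commutative algebra with basis `1, x, y, z, yz, y², z², w` which is the quotient of
`k[x,y,z]` by the given ideal together with all forms of degree `4`; here `w = z³`. -/
@[ext] structure Trunc16 (k : Type*) where
  c : k
  x : k
  y : k
  z : k
  yz : k
  yy : k
  zz : k
  w : k

namespace Trunc16

variable {k : Type*} [Field k]

instance : Zero (Trunc16 k) := ⟨⟨0, 0, 0, 0, 0, 0, 0, 0⟩⟩
instance : One (Trunc16 k) := ⟨⟨1, 0, 0, 0, 0, 0, 0, 0⟩⟩
instance : Add (Trunc16 k) := ⟨fun a b => ⟨a.c + b.c, a.x + b.x, a.y + b.y, a.z + b.z,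
  a.yz + b.yz, a.yy + b.yy, a.zz + b.zz, a.w + b.w⟩⟩
instance : Neg (Trunc16 k) := ⟨fun a => ⟨-a.c, -a.x, -a.y, -a.z, -a.yz, -a.yy, -a.zz, -a.w⟩⟩
/-- Multiplication uses `x² = yz`, `xy = xz = -yz` in degree two, and in degree three the fact
that every cubic monomial is `w` or `-w`. -/
instance : Mul (Trunc16 k) := ⟨fun a b => ⟨a.c * b.c,
  a.c * b.x + a.x * b.c, a.c * b.y + a.y * b.c, a.c * b.z + a.z * b.c,
  a.c * b.yz + a.yz * b.c + a.x * b.x - a.x * b.y - a.y * b.x - a.x * b.z - a.z * b.x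
    + a.y * b.z + a.z * b.y,
  a.c * b.yy + a.yy * b.c + a.y * b.y,
  a.c * b.zz + a.zz * b.c + a.z * b.z,
  a.c * b.w + a.w * b.c + a.x * (b.yz + b.yy + b.zz) + b.x * (a.yz + a.yy + a.zz)
    + a.y * (-b.yz + b.yy - b.zz) + b.y * (-a.yz + a.yy - a.zz)
    + a.z * (-b.yz - b.yy + b.zz) + b.z * (-a.yz - a.yy + a.zz)⟩⟩

lemma zero_def : (0 : Trunc16 k) = ⟨0, 0, 0, 0, 0, 0, 0, 0⟩ := rfl
lemma one_def : (1 : Trunc16 k) = ⟨1, 0, 0, 0, 0, 0, 0, 0⟩ := rfl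
lemma add_def (a b : Trunc16 k) : a + b = ⟨a.c + b.c, a.x + b.x, a.y + b.y, a.z + b.z,
  a.yz + b.yz, a.yy + b.yy, a.zz + b.zz, a.w + b.w⟩ := rfl
lemma neg_def (a : Trunc16 k) :
  -a = ⟨-a.c, -a.x, -a.y, -a.z, -a.yz, -a.yy, -a.zz, -a.w⟩ := rfl
lemma mul_def (a b : Trunc16 k) : a * b = ⟨a.c * b.c,
  a.c * b.x + a.x * b.c, a.c * b.y + a.y * b.c, a.c * b.z + a.z * b.c,
  a.c * b.yz + a.yz * b.c + a.x * b.x - a.x * b.y - a.y * b.x - a.x * b.z - a.z * b.x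
    + a.y * b.z + a.z * b.y,
  a.c * b.yy + a.yy * b.c + a.y * b.y,
  a.c * b.zz + a.zz * b.c + a.z * b.z,
  a.c * b.w + a.w * b.c + a.x * (b.yz + b.yy + b.zz) + b.x * (a.yz + a.yy + a.zz)
    + a.y * (-b.yz + b.yy - b.zz) + b.y * (-a.yz + a.yy - a.zz)
    + a.z * (-b.yz - b.yy + b.zz) + b.z * (-a.yz - a.yy + a.zz)⟩ := rfl

instance : CommRing (Trunc16 k) where
  add_assoc a b c := by ext <;> simp only [add_def] <;> ring
  zero_add a := by ext <;> simp only [add_def, zero_def] <;> ring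
  add_zero a := by ext <;> simp only [add_def, zero_def] <;> ring
  add_comm a b := by ext <;> simp only [add_def] <;> ring
  neg_add_cancel a := by ext <;> simp only [add_def, neg_def, zero_def] <;> ring
  mul_assoc a b c := by ext <;> simp only [mul_def] <;> ring
  one_mul a := by ext <;> simp only [mul_def, one_def] <;> ring
  mul_one a := by ext <;> simp only [mul_def, one_def] <;> ring
  mul_comm a b := by ext <;> simp only [mul_def] <;> ring
  left_distrib a b c := by ext <;> simp only [mul_def, add_def] <;> ring
  right_distrib a b c := by ext <;> simp only [mul_def, add_def] <;> ring
  zero_mul a := by ext <;> simp only [mul_def, zero_def] <;> ring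
  mul_zero a := by ext <;> simp only [mul_def, zero_def] <;> ring
  nsmul := nsmulRec
  zsmul := zsmulRec

/-- The inclusion of the constants. -/
def const : k →+* Trunc16 k where
  toFun t := ⟨t, 0, 0, 0, 0, 0, 0, 0⟩
  map_one' := rfl
  map_zero' := rfl
  map_add' a b := by ext <;> simp [add_def]
  map_mul' a b := by ext <;> simp [mul_def]

lemma const_apply (t : k) : const t = (⟨t, 0, 0, 0, 0, 0, 0, 0⟩ : Trunc16 k) := rfl

/-- `Trunc16 k` is local: an element with nonzero constant term is a nonzerodivisor. -/
lemma eq_zero_of_mul {a b : Trunc16 k} (h : a * b = 0) (ha : a.c ≠ 0) : b = 0 := by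
  rw [mul_def, zero_def, Trunc16.ext_iff] at h
  obtain ⟨h0, h1, h2, h3, h4, h5, h6, h7⟩ := h
  simp only at h0 h1 h2 h3 h4 h5 h6 h7
  have c0 : b.c = 0 := by simpa [ha] using h0
  have c1 : b.x = 0 := by simpa [ha, c0] using h1
  have c2 : b.y = 0 := by simpa [ha, c0] using h2
  have c3 : b.z = 0 := by simpa [ha, c0] using h3
  have c4 : b.yz = 0 := by simpa [ha, c0, c1, c2, c3] using h4
  have c5 : b.yy = 0 := by simpa [ha, c0, c1, c2, c3] using h5
  have c6 : b.zz = 0 := by simpa [ha, c0, c1, c2, c3] using h6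
  have c7 : b.w = 0 := by simpa [ha, c0, c1, c2, c3, c4, c5, c6] using h7
  ext <;> assumption

end Trunc16

/-! ### Linear forms with product zero -/

/-- The kernel of a linear form on `k³` is not contained in a line. -/
lemma exists_ker_notMem_line {k : Type*} [Field k] (l₁ l₂ l₃ v₁ v₂ v₃ : k) :
    ∃ q₁ q₂ q₃ : k, l₁ * q₁ + l₂ * q₂ + l₃ * q₃ = 0 ∧
      ¬ ∃ t, q₁ = t * v₁ ∧ q₂ = t * v₂ ∧ q₃ = t * v₃ := by
  by_contra! H
  have H' : ∀ q₁ q₂ q₃ : k, l₁ * q₁ + l₂ * q₂ + l₃ * q₃ = 0 →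
      q₁ * v₂ = q₂ * v₁ ∧ q₁ * v₃ = q₃ * v₁ ∧ q₂ * v₃ = q₃ * v₂ ∧
      (v₁ = 0 → q₁ = 0) ∧ (v₂ = 0 → q₂ = 0) ∧ (v₃ = 0 → q₃ = 0) := by
    intro q₁ q₂ q₃ h
    obtain ⟨t, rfl, rfl, rfl⟩ := H q₁ q₂ q₃ h
    refine ⟨by ring, by ring, by ring, ?_, ?_, ?_⟩ <;> rintro rfl <;> simp
  have A := H' l₂ (-l₁) 0 (by ring)
  have B := H' l₃ 0 (-l₁) (by ring)
  have C := H' 0 l₃ (-l₂) (by ring)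
  by_cases h1 : l₁ = 0
  · by_cases h2 : l₂ = 0
    · by_cases h3 : l₃ = 0
      · have D := H' 1 0 0 (by simp [h1, h2, h3])
        have E := H' 0 1 0 (by simp [h1, h2, h3])
        grind
      · grind
    · grind
  · grind

/-- If the linear forms `a`, `b` have product zero in degree two, then multiplication by `b` on
linear forms has rank at most one, or one of `x + y`, `x + z` annihilates `a` and is not a multiple
of `b`. -/
lemma linear_annihilators {k : Type*} [Field k] (a₁ a₂ a₃ b₁ b₂ b₃ : k)
    (h4 : a₁ * b₁ - a₁ * b₂ - a₂ * b₁ - a₁ * b₃ - a₃ * b₁ + a₂ * b₃ + a₃ * b₂ = 0)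
    (h5 : a₂ * b₂ = 0) (h6 : a₃ * b₃ = 0) :
    (∃ v₁ v₂ v₃ : k, ∀ c₁ c₂ c₃ : k, ∃ t,
      b₁ * c₁ - b₁ * c₂ - b₂ * c₁ - b₁ * c₃ - b₃ * c₁ + b₂ * c₃ + b₃ * c₂ = t * v₁ ∧
      b₂ * c₂ = t * v₂ ∧ b₃ * c₃ = t * v₃) ∨
    ∃ u₂ u₃ : k, (u₂ = 1 ∧ u₃ = 0 ∨ u₂ = 0 ∧ u₃ = 1) ∧
      (a₁ - a₂ - a₁ * u₂ - a₁ * u₃ - a₃ + a₂ * u₃ + a₃ * u₂ = 0) ∧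
      a₂ * u₂ = 0 ∧ a₃ * u₃ = 0 ∧
      ¬ ∃ t, 1 = t * b₁ ∧ u₂ = t * b₂ ∧ u₃ = t * b₃ := by
  by_cases hx : b₂ = 0 ∧ b₃ = 0
  · obtain ⟨rfl, rfl⟩ := hx
    exact .inl ⟨1, 0, 0, fun c₁ c₂ c₃ => ⟨b₁ * c₁ - b₁ * c₂ - b₁ * c₃, by ring, by ring, by ring⟩⟩
  by_cases hy : b₁ = b₂ ∧ b₃ = 0
  · obtain ⟨rfl, rfl⟩ := hy
    exact .inl ⟨-1, 1, 0, fun c₁ c₂ c₃ => ⟨b₁ * c₂, by ring, by ring, by ring⟩⟩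
  by_cases hz : b₁ = b₃ ∧ b₂ = 0
  · obtain ⟨rfl, rfl⟩ := hz
    exact .inl ⟨-1, 0, 1, fun c₁ c₂ c₃ => ⟨b₁ * c₃, by ring, by ring, by ring⟩⟩
  right
  have ny : ¬ ∃ t, 1 = t * b₁ ∧ 1 = t * b₂ ∧ 0 = t * b₃ := by
    rintro ⟨t, e1, e2, e3⟩
    apply hy
    constructor <;> grind
  have nz : ¬ ∃ t, 1 = t * b₁ ∧ 0 = t * b₂ ∧ 1 = t * b₃ := by
    rintro ⟨t, e1, e2, e3⟩
    apply hz
    constructor <;> grind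
  by_cases h2 : a₂ = 0
  · refine ⟨1, 0, .inl ⟨rfl, rfl⟩, ?_, ?_, ?_, ny⟩ <;> grind
  · refine ⟨0, 1, .inr ⟨rfl, rfl⟩, ?_, ?_, ?_, nz⟩ <;> grind

/-! ### A criterion for the absence of exact zero divisors -/

/-- The criterion behind the first assertion, for a ring `R` mapping to `Trunc16 k`.
`H0`: zero divisors have no constant term. `H2`: `ann a` contains lifts of a plane of quadrics, so if
`ann a = (b)`, multiplication by the linear part of `b` has rank at least two. `H1`: if
`x + u₂ y + u₃ z`, equal to `x + y` or `x + z`, kills the linear part of `a` and is not a multiple of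
the linear form `v`, then some element of `ann a` has linear part outside the line of `v`; taking for
`v` the linear part of `b` gives the contradiction. -/
lemma not_exactZeroDivisor_of_trunc {k R : Type*} [Field k] [CommRing R] (π : R →+* Trunc16 k)
    (H0 : ∀ a b : R, a * b = 0 → (π a).c ≠ 0 → b = 0)
    (H2 : ∀ a : R, (π a).c = 0 → ∃ l₁ l₂ l₃ : k, ∀ q₁ q₂ q₃ : k,
      l₁ * q₁ + l₂ * q₂ + l₃ * q₃ = 0 → ∃ r, π r = ⟨0, 0, 0, 0, q₁, q₂, q₃, 0⟩ ∧ r * a = 0)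
    (H1 : ∀ (a : R) (v₁ v₂ v₃ u₂ u₃ : k), (π a).c = 0 →
      (u₂ = 1 ∧ u₃ = 0 ∨ u₂ = 0 ∧ u₃ = 1) →
      ((π a).x - (π a).y - (π a).x * u₂ - (π a).x * u₃ - (π a).z + (π a).y * u₃
        + (π a).z * u₂ = 0) → (π a).y * u₂ = 0 → (π a).z * u₃ = 0 →
      (¬ ∃ t, 1 = t * v₁ ∧ u₂ = t * v₂ ∧ u₃ = t * v₃) →
      ∃ r, (π r).c = 0 ∧ r * a = 0 ∧
        ¬ ∃ t, (π r).x = t * v₁ ∧ (π r).y = t * v₂ ∧ (π r).z = t * v₃)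
    (a : R) : ¬ IsExactZeroDivisor a := by
  rintro ⟨ha, b, hb, hab⟩
  have hba : b * a = 0 := (hab b).2 (Ideal.mem_span_singleton_self b)
  have a0 : (π a).c = 0 := by
    by_contra h
    exact hb (H0 a b (by rw [mul_comm, hba]) h)
  have b0 : (π b).c = 0 := by
    by_contra h
    exact ha (H0 b a hba h)
  have hdiv : ∀ r, r * a = 0 → ∃ c, π r = π b * c := by
    intro r hr
    obtain ⟨c, rfl⟩ := Ideal.mem_span_singleton.1 ((hab r).1 hr)
    exact ⟨π c, map_mul _ _ _⟩
  have hπ : π a * π b = 0 := by rw [← map_mul, mul_comm, hba, map_zero]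
  generalize hB : π b = B at *
  rw [Trunc16.mul_def, Trunc16.zero_def, Trunc16.ext_iff] at hπ
  obtain ⟨-, -, -, -, h4, h5, h6, -⟩ := hπ
  simp only [a0, b0, zero_mul, mul_zero, zero_add] at h4 h5 h6
  obtain ⟨l₁, l₂, l₃, hl⟩ := H2 a a0
  by_cases hlin : B.x = 0 ∧ B.y = 0 ∧ B.z = 0
  · obtain ⟨q₁, q₂, q₃, hq, hn⟩ := exists_ker_notMem_line l₁ l₂ l₃ B.yz B.yy B.zz
    obtain ⟨r, hr, hra⟩ := hl _ _ _ hq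
    obtain ⟨c, hc⟩ := hdiv r hra
    rw [hr, Trunc16.mul_def, Trunc16.ext_iff] at hc
    simp only [b0, hlin] at hc
    exact hn ⟨c.c, by linear_combination hc.2.2.2.2.1, by linear_combination hc.2.2.2.2.2.1,
      by linear_combination hc.2.2.2.2.2.2.1⟩
  rcases linear_annihilators _ _ _ _ _ _ h4 h5 h6 with
    ⟨v₁, v₂, v₃, hv⟩ | ⟨u₂, u₃, hu, e1, e2, e3, hn⟩
  · obtain ⟨q₁, q₂, q₃, hq, hn⟩ := exists_ker_notMem_line l₁ l₂ l₃ v₁ v₂ v₃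
    obtain ⟨r, hr, hra⟩ := hl _ _ _ hq
    obtain ⟨c, hc⟩ := hdiv r hra
    rw [hr, Trunc16.mul_def, Trunc16.ext_iff] at hc
    simp only [b0] at hc
    obtain ⟨-, k1, k2, k3, k4, k5, k6, -⟩ := hc
    have c0 : c.c = 0 := by
      by_contra h
      apply hlin
      refine ⟨?_, ?_, ?_⟩ <;> grind
    obtain ⟨t, t1, t2, t3⟩ := hv c.x c.y c.z
    refine hn ⟨t, ?_, ?_, ?_⟩
    · rw [k4, ← t1, c0]; ring
    · rw [k5, ← t2, c0]; ring
    · rw [k6, ← t3, c0]; ring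
  · obtain ⟨r, hr0, hra, hrn⟩ := H1 a B.x B.y B.z u₂ u₃ a0 hu e1 e2 e3 hn
    obtain ⟨c, hc⟩ := hdiv r hra
    rw [hc, Trunc16.mul_def] at hrn
    simp only [b0] at hrn
    exact hrn ⟨c.c, by ring, by ring, by ring⟩

/-! ### Structure of the quotient ring -/

/-- The ideal of the statement. -/
noncomputable def ideal16 (k : Type*) [Field k] : Ideal (MvPolynomial (Fin 3) k) :=
  Ideal.span {X 0 * X 2 + X 1 * X 2, X 0 * X 1 + X 1 * X 2,
      X 0 ^ 2 - X 1 * X 2, X 1 * X 2 ^ 2 + X 2 ^ 3, X 1 ^ 3 - X 2 ^ 3}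

section quotient

variable {k : Type*} [Field k]

/-- The image of the `i`-th variable in the quotient ring. -/
noncomputable def gen16 (i : Fin 3) : MvPolynomial (Fin 3) k ⧸ ideal16 k :=
  Ideal.Quotient.mk (ideal16 k) (X i)

/-- Evaluation of polynomials induces a map out of the quotient when the five generators vanish. -/
noncomputable def lift16 {T : Type*} [CommRing T] (φ : k →+* T) (g : Fin 3 → T)
    (h1 : g 0 * g 2 + g 1 * g 2 = 0) (h2 : g 0 * g 1 + g 1 * g 2 = 0)
    (h3 : g 0 ^ 2 - g 1 * g 2 = 0) (h4 : g 1 * g 2 ^ 2 + g 2 ^ 3 = 0)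
    (h5 : g 1 ^ 3 - g 2 ^ 3 = 0) : (MvPolynomial (Fin 3) k ⧸ ideal16 k) →+* T :=
  Ideal.Quotient.lift (ideal16 k) (eval₂Hom φ g) (by
    intro p hp
    have : ideal16 k ≤ RingHom.ker (eval₂Hom φ g) := by
      rw [ideal16, Ideal.span_le]
      rintro p (rfl | rfl | rfl | rfl | rfl) <;>
        simp [RingHom.mem_ker, h1, h2, h3, h4, h5]
    exact this hp)

/-- The canonical surjection onto the truncation in degrees at most three. -/
noncomputable def toTrunc16 : (MvPolynomial (Fin 3) k ⧸ ideal16 k) →+* Trunc16 k :=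
  lift16 Trunc16.const
    ![⟨0, 1, 0, 0, 0, 0, 0, 0⟩, ⟨0, 0, 1, 0, 0, 0, 0, 0⟩, ⟨0, 0, 0, 1, 0, 0, 0, 0⟩]
    (by ext <;> simp [Trunc16.mul_def, Trunc16.add_def, Trunc16.zero_def])
    (by ext <;> simp [Trunc16.mul_def, Trunc16.add_def, Trunc16.zero_def])
    (by ext <;> simp [pow_succ, Trunc16.mul_def, Trunc16.add_def, Trunc16.neg_def,
          Trunc16.zero_def, Trunc16.one_def, sub_eq_add_neg])
    (by ext <;> simp [pow_succ, Trunc16.mul_def, Trunc16.add_def, Trunc16.neg_def,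
          Trunc16.zero_def, Trunc16.one_def, sub_eq_add_neg])
    (by ext <;> simp [pow_succ, Trunc16.mul_def, Trunc16.add_def, Trunc16.neg_def,
          Trunc16.zero_def, Trunc16.one_def, sub_eq_add_neg])

/-- In characteristic two the ideal vanishes on the line `x = y = z`; this is the restriction of
functions to that line. -/
noncomputable def toLine16 (h2 : (2 : k) = 0) :
    (MvPolynomial (Fin 3) k ⧸ ideal16 k) →+* Polynomial k :=
  have h : (2 : Polynomial k) = 0 := by
    rw [← map_ofNat (Polynomial.C : k →+* Polynomial k) 2, h2, map_zero]
  lift16 Polynomial.C (fun _ => Polynomial.X)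
    (by linear_combination Polynomial.X ^ 2 * h) (by linear_combination Polynomial.X ^ 2 * h)
    (by ring) (by linear_combination Polynomial.X ^ 3 * h) (by ring)

/-- Constants of the quotient ring. -/
noncomputable def const16 : k →+* (MvPolynomial (Fin 3) k ⧸ ideal16 k) :=
  (Ideal.Quotient.mk (ideal16 k)).comp C

lemma lift16_gen {T : Type*} [CommRing T] (φ : k →+* T) (g : Fin 3 → T) (h1 h2 h3 h4 h5)
    (i : Fin 3) : lift16 φ g h1 h2 h3 h4 h5 (gen16 i) = g i := by
  exact (Ideal.Quotient.lift_mk _ _ _).trans (eval₂Hom_X' _ _ _)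

lemma lift16_const {T : Type*} [CommRing T] (φ : k →+* T) (g : Fin 3 → T) (h1 h2 h3 h4 h5)
    (t : k) : lift16 φ g h1 h2 h3 h4 h5 (const16 t) = φ t := by
  exact (Ideal.Quotient.lift_mk _ _ _).trans (eval₂Hom_C _ _ _)

/-- The linear section of `toTrunc16` given by the chosen monomial basis. -/
noncomputable def sec16 (q : Trunc16 k) : MvPolynomial (Fin 3) k ⧸ ideal16 k :=
  const16 q.c + const16 q.x * gen16 0 + const16 q.y * gen16 1 + const16 q.z * gen16 2
    + const16 q.yz * (gen16 1 * gen16 2) + const16 q.yy * gen16 1 ^ 2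
    + const16 q.zz * gen16 2 ^ 2 + const16 q.w * gen16 2 ^ 3

lemma toTrunc16_gen0 : toTrunc16 (gen16 0) = (⟨0, 1, 0, 0, 0, 0, 0, 0⟩ : Trunc16 k) :=
  lift16_gen ..
lemma toTrunc16_gen1 : toTrunc16 (gen16 1) = (⟨0, 0, 1, 0, 0, 0, 0, 0⟩ : Trunc16 k) :=
  lift16_gen ..
lemma toTrunc16_gen2 : toTrunc16 (gen16 2) = (⟨0, 0, 0, 1, 0, 0, 0, 0⟩ : Trunc16 k) :=
  lift16_gen ..
lemma toTrunc16_const (t : k) : toTrunc16 (const16 t) = ⟨t, 0, 0, 0, 0, 0, 0, 0⟩ :=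
  lift16_const ..
lemma toLine16_gen (h2 : (2 : k) = 0) (i) : toLine16 h2 (gen16 i) = Polynomial.X := by
  unfold toLine16; exact lift16_gen ..
lemma toLine16_const (h2 : (2 : k) = 0) (t : k) : toLine16 h2 (const16 t) = Polynomial.C t := by
  unfold toLine16; exact lift16_const ..

lemma toTrunc16_sec (q : Trunc16 k) : toTrunc16 (sec16 q) = q := by
  simp only [sec16, map_add, map_mul, map_pow, toTrunc16_gen0, toTrunc16_gen1, toTrunc16_gen2,
    toTrunc16_const, pow_succ, pow_zero, one_mul]
  ext <;> simp [Trunc16.mul_def, Trunc16.add_def]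

lemma toTrunc16_z4 : toTrunc16 (gen16 2 ^ 4) = (0 : Trunc16 k) := by
  simp only [map_mul, toTrunc16_gen2, pow_succ, pow_zero, one_mul]
  ext <;> simp [Trunc16.mul_def, Trunc16.zero_def]

lemma rel16 : gen16 0 * gen16 2 + gen16 1 * gen16 2 = (0 : MvPolynomial (Fin 3) k ⧸ ideal16 k) ∧
    gen16 0 * gen16 1 + gen16 1 * gen16 2 = (0 : MvPolynomial (Fin 3) k ⧸ ideal16 k) ∧
    gen16 0 ^ 2 - gen16 1 * gen16 2 = (0 : MvPolynomial (Fin 3) k ⧸ ideal16 k) ∧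
    gen16 1 * gen16 2 ^ 2 + gen16 2 ^ 3 = (0 : MvPolynomial (Fin 3) k ⧸ ideal16 k) ∧
    gen16 1 ^ 3 - gen16 2 ^ 3 = (0 : MvPolynomial (Fin 3) k ⧸ ideal16 k) := by
  simp only [gen16, ← map_mul, ← map_pow, ← map_add, ← map_sub, Ideal.Quotient.eq_zero_iff_mem]
  refine ⟨?_, ?_, ?_, ?_, ?_⟩ <;> apply Ideal.subset_span <;> simp

/-- Modulo `z⁴`, every element is a combination of the eight basis monomials. -/
lemma exists_sec16 (r : MvPolynomial (Fin 3) k ⧸ ideal16 k) :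
    ∃ q s, r = sec16 q + gen16 2 ^ 4 * s := by
  obtain ⟨p, rfl⟩ := Ideal.Quotient.mk_surjective r
  obtain ⟨h1, h2, h3, h4, h5⟩ := rel16 (k := k)
  induction p using MvPolynomial.induction_on with
  | C t => exact ⟨⟨t, 0, 0, 0, 0, 0, 0, 0⟩, 0, by simp [sec16, const16]⟩
  | add p p' hp hp' =>
    obtain ⟨q, s, h⟩ := hp
    obtain ⟨q', s', h'⟩ := hp'
    refine ⟨q + q', s + s', ?_⟩
    rw [map_add, h, h']
    simp only [sec16, Trunc16.add_def, map_add]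
    ring
  | mul_X p i hp =>
    obtain ⟨q, s, h⟩ := hp
    have hg : Ideal.Quotient.mk (ideal16 k) (X i) = gen16 i := rfl
    rw [map_mul, h, hg]
    have d : gen16 1 ^ 2 * gen16 2 + gen16 2 ^ 3 = (0 : MvPolynomial (Fin 3) k ⧸ ideal16 k) := by
      linear_combination gen16 1 * h1 - gen16 2 * h2 + h4
    fin_cases i
    · refine ⟨q * ⟨0, 1, 0, 0, 0, 0, 0, 0⟩, s * gen16 0 + const16 q.w, ?_⟩
      simp [sec16, Trunc16.mul_def]
      generalize (gen16 0 : MvPolynomial (Fin 3) k ⧸ ideal16 k) = x at *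
      generalize (gen16 1 : MvPolynomial (Fin 3) k ⧸ ideal16 k) = y at *
      generalize (gen16 2 : MvPolynomial (Fin 3) k ⧸ ideal16 k) = z at *
      linear_combination const16 q.x * h3 + const16 q.y * h2 + const16 q.z * h1
        + const16 q.yz * (z * h2 - h4) + const16 q.yy * (y * h2 - d)
        + const16 q.zz * (z * h1 - h4) + const16 q.w * (z ^ 2 * h1 - z * h4)
    · refine ⟨q * ⟨0, 0, 1, 0, 0, 0, 0, 0⟩, s * gen16 1 - const16 q.w, ?_⟩
      simp [sec16, Trunc16.mul_def]
      generalize (gen16 0 : MvPolynomial (Fin 3) k ⧸ ideal16 k) = x at *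
      generalize (gen16 1 : MvPolynomial (Fin 3) k ⧸ ideal16 k) = y at *
      generalize (gen16 2 : MvPolynomial (Fin 3) k ⧸ ideal16 k) = z at *
      linear_combination const16 q.x * h2 + const16 q.yz * d + const16 q.yy * h5
        + const16 q.zz * h4 + const16 q.w * z * h4
    · refine ⟨q * ⟨0, 0, 0, 1, 0, 0, 0, 0⟩, s * gen16 2 + const16 q.w, ?_⟩
      simp [sec16, Trunc16.mul_def]
      generalize (gen16 0 : MvPolynomial (Fin 3) k ⧸ ideal16 k) = x at *
      generalize (gen16 1 : MvPolynomial (Fin 3) k ⧸ ideal16 k) = y at *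
      generalize (gen16 2 : MvPolynomial (Fin 3) k ⧸ ideal16 k) = z at *
      linear_combination const16 q.x * h1 + const16 q.yz * h4 + const16 q.yy * d

lemma eq_sec16 (r : MvPolynomial (Fin 3) k ⧸ ideal16 k) :
    ∃ s, r = sec16 (toTrunc16 r) + gen16 2 ^ 4 * s := by
  obtain ⟨q, s, h⟩ := exists_sec16 r
  have : toTrunc16 r = q := by
    rw [h, map_add, map_mul, toTrunc16_z4, zero_mul, add_zero, toTrunc16_sec]
  exact ⟨s, by rw [this, h]⟩

lemma sec16_zero : sec16 (0 : Trunc16 k) = 0 := by simp [sec16, Trunc16.zero_def]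

/-- Two ways of rewriting `y²z²` give `2z⁴ = 0`. -/
lemma two_mul_z4 : 2 * gen16 2 ^ 4 = (0 : MvPolynomial (Fin 3) k ⧸ ideal16 k) := by
  obtain ⟨h1, h2, h3, h4, h5⟩ := rel16 (k := k)
  have d : gen16 1 ^ 2 * gen16 2 + gen16 2 ^ 3 = (0 : MvPolynomial (Fin 3) k ⧸ ideal16 k) := by
    linear_combination gen16 1 * h1 - gen16 2 * h2 + h4
  linear_combination gen16 2 * h4 + gen16 2 * d - gen16 1 * h4

lemma toTrunc16_injective (h2 : (2 : k) ≠ 0) (r : MvPolynomial (Fin 3) k ⧸ ideal16 k)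
    (hr : toTrunc16 r = 0) : r = 0 := by
  obtain ⟨s, hs⟩ := eq_sec16 r
  have hz : gen16 2 ^ 4 = (0 : MvPolynomial (Fin 3) k ⧸ ideal16 k) := by
    have h : const16 (2⁻¹ : k) * 2 = 1 := by
      rw [← map_ofNat (const16 (k := k)) 2, ← map_mul, inv_mul_cancel₀ h2, map_one]
    linear_combination const16 (2⁻¹ : k) * two_mul_z4 (k := k) - gen16 2 ^ 4 * h
  rw [hs, hr, sec16_zero, hz, zero_mul, add_zero]

/-- Multiplication by `z⁴` factors through restriction to the line. -/
lemma z4_mul (h2 : (2 : k) = 0) (s : MvPolynomial (Fin 3) k ⧸ ideal16 k) :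
    gen16 2 ^ 4 * s = gen16 2 ^ 4 * (toLine16 h2 s).eval₂ const16 (gen16 2) := by
  obtain ⟨p, rfl⟩ := Ideal.Quotient.mk_surjective s
  obtain ⟨h1, -, -, h4, -⟩ := rel16 (k := k)
  induction p using MvPolynomial.induction_on with
  | C t =>
    change gen16 2 ^ 4 * const16 t = gen16 2 ^ 4 * (toLine16 h2 (const16 t)).eval₂ _ _
    rw [toLine16_const, Polynomial.eval₂_C]
  | add p p' hp hp' =>
    rw [map_add, map_add, Polynomial.eval₂_add, mul_add, mul_add, hp, hp']
  | mul_X p i hp =>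
    have hg : Ideal.Quotient.mk (ideal16 k) (X i) = gen16 i := rfl
    have key : gen16 2 ^ 4 * gen16 i
        = (gen16 2 ^ 4 * gen16 2 : MvPolynomial (Fin 3) k ⧸ ideal16 k) := by
      have e := two_mul_z4 (k := k)
      fin_cases i
      · change gen16 2 ^ 4 * gen16 0 = _
        linear_combination gen16 2 ^ 3 * h1 - gen16 2 ^ 2 * h4
      · change gen16 2 ^ 4 * gen16 1 = _
        linear_combination gen16 2 ^ 2 * h4 - gen16 2 * e
      · rfl
    rw [map_mul, map_mul, hg, toLine16_gen, Polynomial.eval₂_mul, Polynomial.eval₂_X]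
    linear_combination gen16 i * hp
      + (toLine16 h2 (Ideal.Quotient.mk (ideal16 k) p)).eval₂ const16 (gen16 2) * key

lemma toTrunc16_toLine16_injective (h2 : (2 : k) = 0) (r : MvPolynomial (Fin 3) k ⧸ ideal16 k)
    (hr : toTrunc16 r = 0) (hl : toLine16 h2 r = 0) : r = 0 := by
  obtain ⟨s, hs⟩ := eq_sec16 r
  rw [hr, sec16_zero, zero_add] at hs
  have : toLine16 h2 s = 0 := by
    rw [hs, map_mul, map_pow, toLine16_gen] at hl
    simpa using hl
  rw [hs, z4_mul h2, this, Polynomial.eval₂_zero, mul_zero]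

lemma toLine16_sec (h2 : (2 : k) = 0) (q : Trunc16 k) : toLine16 h2 (sec16 q) =
    Polynomial.C q.c + Polynomial.C (q.x + q.y + q.z) * Polynomial.X
      + Polynomial.C (q.yz + q.yy + q.zz) * Polynomial.X ^ 2
      + Polynomial.C q.w * Polynomial.X ^ 3 := by
  simp only [sec16, map_add, map_mul, map_pow, toLine16_gen, toLine16_const]
  ring

lemma toLine16_coeff_zero (h2 : (2 : k) = 0) (r : MvPolynomial (Fin 3) k ⧸ ideal16 k) :
    (toLine16 h2 r).coeff 0 = (toTrunc16 r).c := by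
  obtain ⟨s, hs⟩ := eq_sec16 r
  rw [hs, map_add, map_mul, map_pow, toLine16_gen, toLine16_sec, ← hs]
  simp [Polynomial.mul_coeff_zero]

/-! ### Exact zero divisors -/

theorem not_exactZeroDivisor16 (a : MvPolynomial (Fin 3) k ⧸ ideal16 k) :
    ¬ IsExactZeroDivisor a := by
  by_cases h2 : (2 : k) = 0
  · refine not_exactZeroDivisor_of_trunc toTrunc16 ?_ ?_ ?_ a
    · intro a b hab ha
      apply toTrunc16_toLine16_injective h2
      · exact Trunc16.eq_zero_of_mul (by rw [← map_mul, hab, map_zero]) ha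
      · have h : toLine16 h2 a * toLine16 h2 b = 0 := by rw [← map_mul, hab, map_zero]
        refine (mul_eq_zero.1 h).resolve_left fun h0 => ha ?_
        rw [← toLine16_coeff_zero h2, h0, Polynomial.coeff_zero]
    · intro a a0
      -- A quadric vanishing on the line is killed by all variables.
      refine ⟨1, 1, 1, fun q₁ q₂ q₃ hq => ⟨_, toTrunc16_sec _, ?_⟩⟩
      have hq' : q₁ + q₂ + q₃ = 0 := by linear_combination hq
      apply toTrunc16_toLine16_injective h2
      · rw [map_mul, toTrunc16_sec]
        ext <;> simp only [Trunc16.mul_def, Trunc16.zero_def, a0]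
        case w =>
          linear_combination ((toTrunc16 a).x - (toTrunc16 a).y - (toTrunc16 a).z) * hq'
            + ((toTrunc16 a).y * q₂ + (toTrunc16 a).z * q₃) * h2
        all_goals ring
      · rw [map_mul, toLine16_sec]
        simp [hq']
    · intro a v₁ v₂ v₃ u₂ u₃ a0 hu e1 e2 e3 hn
      -- `x + y` and `x + z` vanish on the line, so they kill all quadrics.
      refine ⟨sec16 ⟨0, 1, u₂, u₃, 0, 0, 0, 0⟩, ?_, ?_, ?_⟩
      · rw [toTrunc16_sec]
      · have hu' : 1 + u₂ + u₃ = 0 := by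
          rcases hu with ⟨rfl, rfl⟩ | ⟨rfl, rfl⟩ <;> linear_combination h2
        apply toTrunc16_toLine16_injective h2
        · rw [map_mul, toTrunc16_sec]
          ext <;> simp only [Trunc16.mul_def, Trunc16.zero_def, a0]
          case yz => linear_combination e1
          case yy => linear_combination e2
          case zz => linear_combination e3
          case w =>
            linear_combination ((toTrunc16 a).yz + (toTrunc16 a).yy + (toTrunc16 a).zz) * hu'
              - (u₂ * ((toTrunc16 a).yz + (toTrunc16 a).zz)
                + u₃ * ((toTrunc16 a).yz + (toTrunc16 a).yy)) * h2
          all_goals ring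
        · rw [map_mul, toLine16_sec]
          simp [hu']
      · rw [toTrunc16_sec]
        exact hn
  · refine not_exactZeroDivisor_of_trunc toTrunc16 ?_ ?_ ?_ a
    · intro a b hab ha
      apply toTrunc16_injective h2
      exact Trunc16.eq_zero_of_mul (by rw [← map_mul, hab, map_zero]) ha
    · intro a a0
      refine ⟨(toTrunc16 a).x - (toTrunc16 a).y - (toTrunc16 a).z,
        (toTrunc16 a).x + (toTrunc16 a).y - (toTrunc16 a).z,
        (toTrunc16 a).x - (toTrunc16 a).y + (toTrunc16 a).z,
        fun q₁ q₂ q₃ hq => ⟨_, toTrunc16_sec _, ?_⟩⟩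
      apply toTrunc16_injective h2
      rw [map_mul, toTrunc16_sec]
      ext <;> simp only [Trunc16.mul_def, Trunc16.zero_def, a0]
      case w => linear_combination hq
      all_goals ring
    · intro a v₁ v₂ v₃ u₂ u₃ a0 hu e1 e2 e3 hn
      generalize hA : toTrunc16 a = A at *
      by_cases hlin : A.x = 0 ∧ A.y = 0 ∧ A.z = 0
      · obtain ⟨q₁, q₂, q₃, hq, hqn⟩ := exists_ker_notMem_line (A.yz + A.yy + A.zz)
          (-A.yz + A.yy - A.zz) (-A.yz - A.yy + A.zz) v₁ v₂ v₃
        refine ⟨sec16 ⟨0, q₁, q₂, q₃, 0, 0, 0, 0⟩, by rw [toTrunc16_sec], ?_,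
          by rw [toTrunc16_sec]; exact hqn⟩
        apply toTrunc16_injective h2
        rw [map_mul, toTrunc16_sec, hA]
        ext <;> simp only [Trunc16.mul_def, Trunc16.zero_def, a0, hlin]
        case w => linear_combination hq
        all_goals ring
      -- The pairing of linear forms with quadrics is perfect, so the cubic error term
      -- can be cancelled by a quadric.
      · obtain ⟨q₁, q₂, q₃, hq⟩ : ∃ q₁ q₂ q₃ : k, (A.x - A.y - A.z) * q₁ + (A.x + A.y - A.z) * q₂
            + (A.x - A.y + A.z) * q₃ = -((A.yz + A.yy + A.zz) + u₂ * (-A.yz + A.yy - A.zz)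
              + u₃ * (-A.yz - A.yy + A.zz)) := by
          generalize -((A.yz + A.yy + A.zz) + u₂ * (-A.yz + A.yy - A.zz)
              + u₃ * (-A.yz - A.yy + A.zz)) = m
          by_cases l1 : A.x - A.y - A.z = 0
          · by_cases l2 : A.x + A.y - A.z = 0
            · by_cases l3 : A.x - A.y + A.z = 0
              · refine absurd ⟨?_, ?_, ?_⟩ hlin <;> apply mul_left_cancel₀ h2
                · linear_combination l2 + l3
                · linear_combination l2 - l1
                · linear_combination l3 - l1
              · exact ⟨0, 0, m / (A.x - A.y + A.z), by field_simp; ring⟩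
            · exact ⟨0, m / (A.x + A.y - A.z), 0, by field_simp; ring⟩
          · exact ⟨m / (A.x - A.y - A.z), 0, 0, by field_simp; ring⟩
        refine ⟨sec16 ⟨0, 1, u₂, u₃, q₁, q₂, q₃, 0⟩, by rw [toTrunc16_sec], ?_,
          by rw [toTrunc16_sec]; exact hn⟩
        apply toTrunc16_injective h2
        rw [map_mul, toTrunc16_sec, hA]
        ext <;> simp only [Trunc16.mul_def, Trunc16.zero_def, a0]
        case yz => linear_combination e1
        case yy => linear_combination e2
        case zz => linear_combination e3
        case w => linear_combination hq
        all_goals ring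

/-! ### Number of generators -/

/-- The coefficients at `xz`, `xy`, `x²`, `y³`. On the ideal they detect the classes of four of the
five generators modulo the maximal ideal. -/
noncomputable def coeffs16 : MvPolynomial (Fin 3) k →ₗ[k] (Fin 4 → k) :=
  LinearMap.pi ![lcoeff k (Finsupp.single 0 1 + Finsupp.single 2 1),
    lcoeff k (Finsupp.single 0 1 + Finsupp.single 1 1),
    lcoeff k (Finsupp.single 0 2), lcoeff k (Finsupp.single 1 3)]

lemma coeffs16_mul_gen (s p : MvPolynomial (Fin 3) k)
    (hp : p ∈ ({X 0 * X 2 + X 1 * X 2, X 0 * X 1 + X 1 * X 2,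
      X 0 ^ 2 - X 1 * X 2, X 1 * X 2 ^ 2 + X 2 ^ 3, X 1 ^ 3 - X 2 ^ 3} :
      Set (MvPolynomial (Fin 3) k))) :
    coeffs16 (s * p) = constantCoeff s • coeffs16 p := by
  rcases hp with rfl | rfl | rfl | rfl | rfl <;> ext i <;> fin_cases i <;>
    simp [coeffs16, mul_add, mul_sub, ← mul_assoc, pow_succ, coeff_mul_X', coeff_X,
      Finsupp.single_apply, constantCoeff_eq, Finsupp.ext_iff, Fin.forall_fin_succ,
      ← Finsupp.single_tsub]

lemma coeffs16_mul (s p : MvPolynomial (Fin 3) k) (hp : p ∈ ideal16 k) :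
    coeffs16 (s * p) = constantCoeff s • coeffs16 p := by
  induction hp using Submodule.span_induction generalizing s with
  | mem p hp => exact coeffs16_mul_gen s p hp
  | zero => simp
  | add p q _ _ hp hq => rw [mul_add, map_add, map_add, hp, hq, smul_add]
  | smul r p _ hp => rw [smul_eq_mul, ← mul_assoc, hp, hp, map_mul, mul_smul]

lemma coeffs16_gens : ∀ i : Fin 4, ∃ p ∈ ideal16 k, coeffs16 p = Pi.single i 1 := by
  intro i
  fin_cases i
  · refine ⟨X 0 * X 2 + X 1 * X 2, Ideal.subset_span (by simp), ?_⟩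
    ext i; fin_cases i <;> simp [coeffs16, pow_succ, coeff_mul_X', coeff_X,
      Finsupp.single_apply, Finsupp.ext_iff, Fin.forall_fin_succ]
  · refine ⟨X 0 * X 1 + X 1 * X 2, Ideal.subset_span (by simp), ?_⟩
    ext i; fin_cases i <;> simp [coeffs16, pow_succ, coeff_mul_X', coeff_X,
      Finsupp.single_apply, Finsupp.ext_iff, Fin.forall_fin_succ]
  · refine ⟨X 0 ^ 2 - X 1 * X 2, Ideal.subset_span (by simp), ?_⟩
    ext i; fin_cases i <;> simp [coeffs16, pow_succ, coeff_mul_X', coeff_X,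
      Finsupp.single_apply, Finsupp.ext_iff, Fin.forall_fin_succ]
  · refine ⟨X 1 ^ 3 - X 2 ^ 3, Ideal.subset_span (by simp), ?_⟩
    ext i; fin_cases i <;> simp [coeffs16, pow_succ, coeff_mul_X', coeff_X,
      Finsupp.single_apply, Finsupp.ext_iff, Fin.forall_fin_succ]

/-- The ideal needs at least four generators, since its image under `coeffs16` is `k⁴` and is
spanned over `k` by the images of any generators. -/
theorem ideal16_ne_span_three (f g h : MvPolynomial (Fin 3) k) :
    Ideal.span {f, g, h} ≠ ideal16 k := by
  intro H
  have hf : f ∈ ideal16 k := H ▸ Ideal.subset_span (by simp)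
  have hg : g ∈ ideal16 k := H ▸ Ideal.subset_span (by simp)
  have hh : h ∈ ideal16 k := H ▸ Ideal.subset_span (by simp)
  have htop : Submodule.span k (Set.range ![coeffs16 f, coeffs16 g, coeffs16 h]) = ⊤ := by
    rw [eq_top_iff, ← (Pi.basisFun k (Fin 4)).span_eq, Submodule.span_le]
    rintro _ ⟨i, rfl⟩
    obtain ⟨p, hp, e⟩ := coeffs16_gens (k := k) i
    rw [Pi.basisFun_apply, ← e]
    rw [← H, Ideal.mem_span_insert] at hp
    obtain ⟨a, q, hq, rfl⟩ := hp
    obtain ⟨b, c, rfl⟩ := Ideal.mem_span_pair.1 hq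
    rw [map_add, map_add, coeffs16_mul _ _ hf, coeffs16_mul _ _ hg, coeffs16_mul _ _ hh]
    refine add_mem ?_ (add_mem ?_ ?_) <;> refine Submodule.smul_mem _ _ (Submodule.subset_span ?_)
    exacts [⟨0, rfl⟩, ⟨1, rfl⟩, ⟨2, rfl⟩]
  have := finrank_range_le_card (R := k) ![coeffs16 f, coeffs16 g, coeffs16 h]
  rw [Set.finrank, htop, finrank_top, Module.finrank_fin_fun, Fintype.card_fin] at this
  omega

end quotient

/-- Let `k` be a field, `S = k[x,y,z]` and
`I = (xz + yz, xy + yz, x² - yz, yz² + z³, y³ - z³)`.  Then the artinian Gorenstein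
local ring `R = S/I` has no exact zero divisor, and `I` is not generated by any
`S`-regular sequence of three elements (`R` is not a complete intersection). -/
theorem stmt16 (k : Type*) [Field k]
    (I : Ideal (MvPolynomial (Fin 3) k))
    (hI : I = Ideal.span {X 0 * X 2 + X 1 * X 2, X 0 * X 1 + X 1 * X 2,
      X 0 ^ 2 - X 1 * X 2, X 1 * X 2 ^ 2 + X 2 ^ 3, X 1 ^ 3 - X 2 ^ 3}) :
    (¬ ∃ a : MvPolynomial (Fin 3) k ⧸ I, IsExactZeroDivisor a) ∧
      ¬ ∃ f g h : MvPolynomial (Fin 3) k,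
        IsRegularSeq3 f g h ∧ Ideal.span {f, g, h} = I := by
  subst hI
  exact ⟨fun ⟨a, ha⟩ => not_exactZeroDivisor16 a ha,
    fun ⟨f, g, h, _, H⟩ => ideal16_ne_span_three f g h H⟩
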